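/- Let N₁ ⊆ {1,…,N} be a set of cached files with Σ_{n∈N₁} F_n > 0, let M be a cache size with 0 ≤ M ≤ Σ_{n∈N₁} F_n, and consider the PF-SA placement q_n = c := M / Σ_{n'∈N₁} F_{n'} for n ∈ N₁ and q_n = 0 for n ∉ N₁. For an active set A with demand map d, let A₁ = {k ∈ A : d_k ∈ N₁} and A₂ = A \ A₁. Then for every leader group U, the D-MCCS delivery rate decomposes as R_MCCS(d; q) = Σ_{S ⊆ A, S ∩ U ≠ ∅, S ∩ A₁ ≠ ∅} c^{|S|−1} (1 − c)^{|A|−|S|+1} · max_{k ∈ S ∩ A₁} F_{d_k} + Σ_{n ∈ {d_k : k ∈ A₂}} F_n, where the first sum is over non-redundant groups containing at least one user requesting a cached file (and the maximum is taken over such users) and the second sum is over the distinct uncached files requested. -/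

import Mathlib

/-!
A group `S` with at least two members has exponent `|S| - 1 > 0`, so its users requesting uncached
files (`q = 0`) contribute `0`, while every user requesting a cached file contributes the common
nonnegative factor `c ^ (|S| - 1) * (1 - c) ^ (|A| - |S| + 1)` times the file size. Hence, as soon
as `S` meets `A₁`, the maximum over `S` is that factor times the maximum of the sizes over `S ∩ A₁`
(`maxOver_eq_mul_maxOver_inter`). A group not meeting `A₁` contributes `0` unless it is a singleton
`{k}` with `k ∈ U ∩ A₂`, in which case it contributes `F (d k)`. As `d` is injective on `U` and
`U`, `A` request the same files, these singletons run exactly once over the distinct uncached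
requested files.
-/

open Finset

/-- Maximum of a real-valued function over a finite set (`0` if the set is empty). -/
noncomputable def maxOver {α : Type*} (S : Finset α) (f : α → ℝ) : ℝ :=
  if h : S.Nonempty then S.sup' h f else 0

/-- The D-MCCS delivery rate: the sum, over nonempty subsets `S ⊆ A` with
`S ∩ U ≠ ∅` (the non-redundant groups), of
`max_{k ∈ S} q_{d_k}^{|S|−1} (1 − q_{d_k})^{|A|−|S|+1} F_{d_k}`. -/
noncomputable def R_MCCS {α : Type*} [DecidableEq α] {N : ℕ} (A U : Finset α)
    (d : α → Fin N) (q F : Fin N → ℝ) : ℝ :=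
  ∑ S ∈ A.powerset.filter (fun S => (S ∩ U).Nonempty),
    maxOver S (fun k =>
      q (d k) ^ (S.card - 1) * (1 - q (d k)) ^ (A.card - S.card + 1) * F (d k))

/-- The lower-bound rate: the maximum over bijections `π : {1,…,|D|} → D` of
`Σ_{s=0}^{|A|−1} Σ_{i=1}^{|D|} C(|A|−i, s) q_{π(i)}^s (1 − q_{π(i)})^{|A|−s} F_{π(i)}`,
where `Acard = |A|`. -/
noncomputable def R_lb {N : ℕ} (Acard : ℕ) (D : Finset (Fin N))
    (q F : Fin N → ℝ) : ℝ :=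
  ⨆ π : Fin D.card ≃ {x : Fin N // x ∈ D},
    ∑ s ∈ Finset.range Acard, ∑ i : Fin D.card,
      ((Acard - (i.1 + 1)).choose s : ℝ) * q (π i).1 ^ s *
        (1 - q (π i).1) ^ (Acard - s) * F (π i).1

/-- `U` is a leader group for active set `A` with demand map `d`: `U ⊆ A`, the demand
map is injective on `U`, and the users in `U` request exactly the distinct files
requested by the users in `A`. -/
def IsLeaderGroup {α : Type*} [DecidableEq α] {N : ℕ} (A U : Finset α)
    (d : α → Fin N) : Prop :=
  U ⊆ A ∧ Set.InjOn d ↑U ∧ U.image d = A.image d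

lemma maxOver_eq_zero {α : Type*} (S : Finset α) (f : α → ℝ) (h : ∀ k ∈ S, f k = 0) :
    maxOver S f = 0 := by
  unfold maxOver
  split_ifs with hS
  · rw [Finset.sup'_congr hS rfl h, Finset.sup'_const]
  · rfl

lemma maxOver_singleton {α : Type*} (k : α) (f : α → ℝ) : maxOver {k} f = f k := by
  simp [maxOver]

/-- If `f` equals `a * g` on `T`, with `a, g ≥ 0`, and vanishes on `S` outside `T`, then the points
outside `T` do not affect the maximum of `f` over `S`, and the factor `a` can be pulled out. -/
lemma maxOver_eq_mul_maxOver_inter {α : Type*} [DecidableEq α] (S T : Finset α) (f g : α → ℝ)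
    (a : ℝ) (ha : 0 ≤ a) (hg : ∀ k, 0 ≤ g k) (hST : (S ∩ T).Nonempty)
    (hin : ∀ k ∈ S, k ∈ T → f k = a * g k) (hout : ∀ k ∈ S, k ∉ T → f k = 0) :
    maxOver S f = a * maxOver (S ∩ T) g := by
  have hS : S.Nonempty := hST.mono Finset.inter_subset_left
  simp only [maxOver, hS, hST, dite_true]
  apply le_antisymm
  · refine Finset.sup'_le _ _ fun k hk => ?_
    by_cases hT : k ∈ T
    · rw [hin k hk hT]
      exact mul_le_mul_of_nonneg_left
        (Finset.le_sup' g (Finset.mem_inter.2 ⟨hk, hT⟩)) ha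
    · rw [hout k hk hT]
      obtain ⟨j, hj⟩ := hST
      exact mul_nonneg ha ((hg j).trans (Finset.le_sup' g hj))
  · obtain ⟨j, hj, hj'⟩ := Finset.exists_mem_eq_sup' hST g
    rw [hj', ← hin j (Finset.mem_inter.1 hj).1 (Finset.mem_inter.1 hj).2]
    exact Finset.le_sup' f (Finset.mem_inter.1 hj).1

/-- PF-SA placement: files in `N₁` are each cached in fraction
`c = M / Σ_{n∈N₁} F_n` and the remaining files are uncached. With
`A₁ = {k ∈ A : d_k ∈ N₁}` and `A₂ = A \ A₁`, the D-MCCS rate decomposes as the sum,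
over non-redundant groups `S` containing at least one user requesting a cached file,
of `c^{|S|−1} (1 − c)^{|A|−|S|+1} max_{k ∈ S ∩ A₁} F_{d_k}`, plus the total size of
the distinct uncached files requested. -/
theorem rate_decomposition_PFSA {α : Type*} [DecidableEq α] {N : ℕ}
    (F : Fin N → ℝ) (hF : ∀ n, 0 ≤ F n)
    (N₁ : Finset (Fin N)) (hN₁ : 0 < ∑ n ∈ N₁, F n)
    (M : ℝ) (hM0 : 0 ≤ M) (hM1 : M ≤ ∑ n ∈ N₁, F n)
    (c : ℝ) (hc : c = M / ∑ n ∈ N₁, F n)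
    (q : Fin N → ℝ) (hq : ∀ n, q n = if n ∈ N₁ then c else 0)
    (A U : Finset α) (d : α → Fin N) (hU : IsLeaderGroup A U d)
    (A₁ A₂ : Finset α) (hA₁ : A₁ = A.filter (fun k => d k ∈ N₁)) (hA₂ : A₂ = A \ A₁) :
    R_MCCS A U d q F
      = (∑ S ∈ A.powerset.filter (fun S => (S ∩ U).Nonempty ∧ (S ∩ A₁).Nonempty),
          c ^ (S.card - 1) * (1 - c) ^ (A.card - S.card + 1) *
            maxOver (S ∩ A₁) (fun k => F (d k)))
        + ∑ n ∈ A₂.image d, F n := by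
  obtain ⟨hUA, hinj, himg⟩ := hU
  have hc0 : 0 ≤ c := hc ▸ div_nonneg hM0 hN₁.le
  have hc1 : c ≤ 1 := hc ▸ (div_le_one hN₁).2 hM1
  have hmem : ∀ k ∈ A, (k ∈ A₁ ↔ d k ∈ N₁) := fun k hk => by simp [hA₁, hk]
  unfold R_MCCS
  rw [← Finset.sum_filter_add_sum_filter_not _ (fun S => (S ∩ A₁).Nonempty),
    Finset.filter_filter, Finset.filter_filter]
  congr 1
  · refine Finset.sum_congr rfl fun S hS => ?_
    simp only [Finset.mem_filter, Finset.mem_powerset] at hS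
    obtain ⟨hSA, -, hS₁⟩ := hS
    refine maxOver_eq_mul_maxOver_inter S A₁ _ _ _
      (mul_nonneg (pow_nonneg hc0 _) (pow_nonneg (sub_nonneg.2 hc1) _))
      (fun k => hF _) hS₁ (fun k hk hk₁ => ?_) (fun k hk hk₁ => ?_)
    · rw [hq, if_pos ((hmem k (hSA hk)).1 hk₁)]
    · -- `S` contains both `k ∉ A₁` and some `j ∈ A₁`, so the exponent `|S| - 1` is positive.
      obtain ⟨j, hj⟩ := hS₁
      rw [Finset.mem_inter] at hj
      have hcard : 1 < S.card :=
        Finset.one_lt_card.2 ⟨k, hk, j, hj.1, fun h => hk₁ (h ▸ hj.2)⟩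
      rw [hq, if_neg (fun h => hk₁ ((hmem k (hSA hk)).2 h)), zero_pow (by omega)]
      simp
  · have himg₂ : A₂.image d = (U ∩ A₂).image d := by
      ext n
      simp only [Finset.mem_image, Finset.mem_inter]
      constructor
      · rintro ⟨k, hk, rfl⟩
        rw [hA₂, Finset.mem_sdiff] at hk
        obtain ⟨u, hu, hud⟩ := Finset.mem_image.1 (himg ▸ Finset.mem_image_of_mem d hk.1)
        refine ⟨u, ⟨hu, ?_⟩, hud⟩
        rw [hA₂, Finset.mem_sdiff, hmem u (hUA hu), hud, ← hmem k hk.1]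
        exact ⟨hUA hu, hk.2⟩
      · rintro ⟨k, hk, rfl⟩
        exact ⟨k, hk.2, rfl⟩
    rw [himg₂, Finset.sum_image (fun x hx y hy h =>
      hinj (Finset.mem_inter.1 hx).1 (Finset.mem_inter.1 hy).1 h)]
    have hzero : ∀ k ∈ A, k ∉ A₁ → q (d k) = 0 := fun k hk hk₁ => by
      rw [hq, if_neg (fun h => hk₁ ((hmem k hk).2 h))]
    have hsub : (U ∩ A₂).image (fun k => ({k} : Finset α)) ⊆
        A.powerset.filter (fun S => (S ∩ U).Nonempty ∧ ¬(S ∩ A₁).Nonempty) := by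
      intro S hS
      obtain ⟨k, hk, rfl⟩ := Finset.mem_image.1 hS
      rw [Finset.mem_inter, hA₂, Finset.mem_sdiff] at hk
      simp [hk.1, hk.2.1, hk.2.2]
    rw [← Finset.sum_subset hsub, Finset.sum_image (fun x _ y _ h => Finset.singleton_injective h)]
    · refine Finset.sum_congr rfl fun k hk => ?_
      rw [Finset.mem_inter, hA₂, Finset.mem_sdiff] at hk
      rw [maxOver_singleton, hzero k hk.2.1 hk.2.2]
      simp
    · intro S hS hS'
      simp only [Finset.mem_filter, Finset.mem_powerset] at hS
      obtain ⟨hSA, ⟨u, hu⟩, hS₁⟩ := hS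
      rw [Finset.mem_inter] at hu
      have hnot : ∀ k ∈ S, k ∉ A₁ := fun k hk hk₁ =>
        hS₁ ⟨k, Finset.mem_inter.2 ⟨hk, hk₁⟩⟩
      -- A one-element `S` would be `{u}` with `u ∈ U ∩ A₂`.
      have hcard : S.card ≠ 1 := by
        intro h
        obtain ⟨a, rfl⟩ := Finset.card_eq_one.1 h
        obtain rfl := Finset.mem_singleton.1 hu.1
        refine hS' (Finset.mem_image.2 ⟨u, ?_, rfl⟩)
        rw [Finset.mem_inter, hA₂, Finset.mem_sdiff]
        exact ⟨hu.2, hUA hu.2, hnot u hu.1⟩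
      have hpos : 0 < S.card := Finset.card_pos.2 ⟨u, hu.1⟩
      refine maxOver_eq_zero _ _ fun k hk => ?_
      rw [hzero k (hSA hk) (hnot k hk), zero_pow (by omega)]
      simp
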